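/- arXiv:2004.06959 — 2 statements merged into one kernel-verified Lean document; each statement's English description precedes it below -/
import Mathlib

section
/- Let M be a finite abelian group written additively and let f : M → M be an endomorphism. Then for every i ≥ 1 the order of the quotient ker(f^{i+1})/ker(f^i) divides the order of ker(f^i)/ker(f^{i−1}). In particular the sequence i ↦ #(ker(f^{i+1})/ker(f^i)) is decreasing, and every term of this sequence divides #ker(f) = #(ker(f^1)/ker(f^0)). -/
/-- The `i`-th quotient of the kernel filtration of the endomorphism `f`:
`ker (f^(i+1)) / ker (f^i)`. -/
def filtQuot {M : Type*} [AddCommGroup M] (f : AddMonoid.End M) (i : ℕ) : Type _ :=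
  (f ^ (i + 1)).ker ⧸ ((f ^ i).ker.addSubgroupOf (f ^ (i + 1)).ker)

theorem filtQuot_card_eq {M : Type*} [AddCommGroup M] (f : AddMonoid.End M) (i : ℕ) :
    Nat.card (filtQuot f i) =
      Nat.card (AddMonoidHom.ker f ⊓ AddMonoidHom.range (f ^ i : AddMonoid.End M) : AddSubgroup M) := by
  let g : (f ^ (i + 1)).ker →+ M := AddMonoidHom.comp (f ^ i) (f ^ (i + 1)).ker.subtype
  have hr : g.range = (AddMonoidHom.ker f ⊓ AddMonoidHom.range (f ^ i : AddMonoid.End M) : AddSubgroup M) := by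
    have key : ∀ x, (f ^ (i + 1)) x = f ((f ^ i) x) := fun x => by rw [pow_succ']; rfl
    ext y
    constructor
    · rintro ⟨⟨x, hx⟩, rfl⟩
      exact ⟨(key x).symm.trans hx, x, rfl⟩
    · rintro ⟨hy, x, rfl⟩
      exact ⟨⟨x, (key x).trans hy⟩, rfl⟩
  rw [← hr]
  exact Nat.card_congr (QuotientAddGroup.quotientKerEquivRange g).toEquiv

theorem filtQuot_dvd_of_le {M : Type*} [AddCommGroup M] (f : AddMonoid.End M) {i j : ℕ}
    (h : i ≤ j) : Nat.card (filtQuot f j) ∣ Nat.card (filtQuot f i) := by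
  rw [filtQuot_card_eq, filtQuot_card_eq]
  apply AddSubgroup.card_dvd_of_le
  refine inf_le_inf_left _ ?_
  rintro _ ⟨x, rfl⟩
  refine ⟨(f ^ (j - i)) x, ?_⟩
  obtain ⟨k, rfl⟩ := Nat.exists_eq_add_of_le h
  rw [Nat.add_sub_cancel_left, pow_add]
  rfl

/-- Let `M` be a finite abelian group (additive) and `f : M → M` an
endomorphism. Then for every `i ≥ 1` the order of `ker (f^(i+1)) / ker (f^i)` divides
the order of `ker (f^i) / ker (f^(i-1))`.  In particular the sequence
`i ↦ #(ker (f^(i+1)) / ker (f^i))` is decreasing, and every term of this sequence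
divides `# ker f = #(ker (f^1) / ker (f^0))`. -/
theorem filtQuot_card_dvd {M : Type*} [AddCommGroup M] [Finite M]
    (f : AddMonoid.End M) :
    (∀ i : ℕ, 1 ≤ i → Nat.card (filtQuot f i) ∣ Nat.card (filtQuot f (i - 1))) ∧
    (∀ i j : ℕ, i ≤ j → Nat.card (filtQuot f j) ≤ Nat.card (filtQuot f i)) ∧
    (Nat.card f.ker = Nat.card (filtQuot f 0)) ∧
    (∀ i : ℕ, Nat.card (filtQuot f i) ∣ Nat.card f.ker) := by
  have h0 : Nat.card f.ker = Nat.card (filtQuot f 0) := by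
    rw [filtQuot_card_eq]
    have : AddMonoidHom.range (f ^ 0 : AddMonoid.End M) = ⊤ := by
      rw [eq_top_iff]
      intro x _
      exact ⟨x, by rw [pow_zero]; rfl⟩
    rw [this, inf_top_eq]
  refine ⟨fun i _ => filtQuot_dvd_of_le f (Nat.sub_le i 1), fun i j h => ?_, h0, fun i => ?_⟩
  · refine Nat.le_of_dvd ?_ (filtQuot_dvd_of_le f h)
    rw [filtQuot_card_eq]
    exact Nat.card_pos
  · rw [h0]
    exact filtQuot_dvd_of_le f (Nat.zero_le i)
end

section
/- Let M and M′ be finite abelian groups written additively, let f : M → M and f′ : M′ → M′ be endomorphisms, and let N : M′ → M be a surjective group homomorphism satisfying N ∘ f′ = f ∘ N. Then for every i ≥ 0, the order of ker(f^{i+1})/ker(f^i) divides the order of ker(f′^{i+1})/ker(f′^i). -/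
theorem filtQuot_aux_mul {M : Type*} [AddCommGroup M] (f g : AddMonoid.End M) (x : M) :
    (f * g) x = f (g x) := rfl

theorem filtQuot_aux_rel {M : Type*} [AddCommGroup M] {H K : AddSubgroup M} (h : H ≤ K) :
    H.relIndex K * Nat.card H = Nat.card K := by
  have := AddSubgroup.relIndex_mul_relIndex ⊥ H K bot_le h
  rw [AddSubgroup.relIndex_bot_left, AddSubgroup.relIndex_bot_left] at this
  rw [mul_comm, this]

theorem filtQuot_aux_card {M : Type*} [AddCommGroup M] [Finite M]
    (f : AddMonoid.End M) (i : ℕ) :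
    Nat.card (filtQuot f i) =
      (AddMonoidHom.range (f ^ (i + 1))).relIndex (AddMonoidHom.range (f ^ i)) := by
  have key : ∀ g : M →+ M, Nat.card g.ker * Nat.card g.range = Nat.card M := fun g => by
    rw [← AddSubgroup.index_ker, AddSubgroup.card_mul_index]
  have hk : (f ^ i).ker ≤ (f ^ (i + 1)).ker := fun x hx => by
    have hx' : (f ^ i) x = 0 := hx
    change (f ^ (i + 1)) x = 0
    rw [pow_succ', filtQuot_aux_mul, hx', map_zero]
  have hr : AddMonoidHom.range (f ^ (i + 1)) ≤ AddMonoidHom.range (f ^ i) := by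
    rintro _ ⟨x, rfl⟩
    exact ⟨f x, by rw [pow_succ]; rfl⟩
  have h1 := filtQuot_aux_rel hk
  have h2 := filtQuot_aux_rel hr
  have h3 := (key (f ^ i)).trans (key (f ^ (i + 1))).symm
  change (f ^ i).ker.relIndex (f ^ (i + 1)).ker = _
  have p1 : 0 < Nat.card (f ^ i).ker := Nat.card_pos
  have p2 : 0 < Nat.card (AddMonoidHom.range (f ^ (i + 1))) := Nat.card_pos
  rw [← h1, ← h2] at h3
  apply Nat.eq_of_mul_eq_mul_right (Nat.mul_pos p1 p2)
  linarith

/-- Let `M`, `M'` be finite abelian groups (additive), `f : M → M`,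
`f' : M' → M'` endomorphisms, and `N : M' → M` a surjective group homomorphism with
`N ∘ f' = f ∘ N`. Then for every `i ≥ 0`, the order of `ker (f^(i+1)) / ker (f^i)`
divides the order of `ker (f'^(i+1)) / ker (f'^i)`. -/
theorem filtQuot_card_dvd_of_surjective_intertwiner {M M' : Type*}
    [AddCommGroup M] [AddCommGroup M'] [Finite M] [Finite M']
    (f : AddMonoid.End M) (f' : AddMonoid.End M') (N : M' →+ M)
    (hN : Function.Surjective N) (hcomm : ∀ x : M', N (f' x) = f (N x)) :
    ∀ i : ℕ, Nat.card (filtQuot f i) ∣ Nat.card (filtQuot f' i) := by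
  intro i
  have hpow : ∀ (n : ℕ) (x : M'), N ((f' ^ n) x) = (f ^ n) (N x) := by
    intro n
    induction n with
    | zero => intro x; rfl
    | succ n ih =>
      intro x
      rw [pow_succ, pow_succ, filtQuot_aux_mul, filtQuot_aux_mul, ih, hcomm]
  have hmap : ∀ n : ℕ, (AddMonoidHom.range (f' ^ n)).map N = AddMonoidHom.range (f ^ n) := by
    intro n
    ext y
    constructor
    · rintro ⟨_, ⟨x, rfl⟩, rfl⟩
      exact ⟨N x, (hpow n x).symm⟩
    · rintro ⟨z, rfl⟩
      obtain ⟨x, rfl⟩ := hN z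
      exact ⟨_, ⟨x, rfl⟩, hpow n x⟩
  have hr : AddMonoidHom.range (f' ^ (i + 1)) ≤ AddMonoidHom.range (f' ^ i) := by
    rintro _ ⟨x, rfl⟩
    exact ⟨f' x, by rw [pow_succ]; rfl⟩
  rw [filtQuot_aux_card, filtQuot_aux_card, ← hmap, ← hmap, AddSubgroup.relIndex_map_map]
  have e : AddMonoidHom.range (f' ^ i) ⊔ N.ker =
      AddMonoidHom.range (f' ^ i) ⊔ (AddMonoidHom.range (f' ^ (i + 1)) ⊔ N.ker) := by
    rw [← sup_assoc, sup_eq_left.mpr hr]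
  rw [e, AddSubgroup.relIndex_sup_right]
  exact AddSubgroup.relIndex_dvd_of_le_left _ le_sup_left
end
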